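/- For every n ≥ 3, the transitive tournament T_n = ({1,…,n}, <) has no quasi Maltsev polymorphism; that is, there is no ternary operation m on {1,…,n} satisfying m(x,x,y) = m(y,x,x) = m(y,y,y) for all x,y and such that a < a', b < b', c < c' together imply m(a,b,c) < m(a',b',c'). -/

import Mathlib

section QuasiMaltsev

variable {α β : Type*}

/-- A quasi Maltsev operation: `m x x y = m y x x = m y y y`. These identities never nest `m`, so
the values may lie in a type other than that of the arguments. -/
def IsQuasiMaltsev (m : α → α → α → β) : Prop :=
  ∀ x y, m x x y = m y x x ∧ m y x x = m y y y

/-- A ternary polymorphism from the digraph `(α, r)` to the digraph `(β, s)`: a homomorphism from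
the third direct power of `(α, r)` to `(β, s)`. The polymorphisms of a single digraph are the case
`r = s`. -/
def IsTernaryPolymorphism (r : α → α → Prop) (s : β → β → Prop) (m : α → α → α → β) : Prop :=
  ∀ a a' b b' c c', r a a' → r b b' → r c c' → s (m a b c) (m a' b' c')

variable {r : α → α → Prop} {s : β → β → Prop} {m : α → α → α → β} {x y z : α}

namespace IsQuasiMaltsev

theorem apply_left_eq_diag (hm : IsQuasiMaltsev m) (x y : α) : m x x y = m y y y :=
  (hm x y).1.trans (hm x y).2

theorem apply_right_eq_diag (hm : IsQuasiMaltsev m) (x y : α) : m y x x = m y y y :=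
  (hm x y).2

theorem rel_diag_of_transitive_triangle (hm : IsQuasiMaltsev m) (hp : IsTernaryPolymorphism r s m)
    (hxy : r x y) (hyz : r y z) (hxz : r x z) : s (m y y y) (m y y y) := by
  have edge : s (m x x y) (m y z z) := hp x y x z y z hxy hxz hyz
  rwa [hm.apply_left_eq_diag x y, hm.apply_right_eq_diag z y] at edge

end IsQuasiMaltsev

theorem transitive_tournament_no_quasiMaltsev_general [Std.Irrefl s]
    (hxy : r x y) (hyz : r y z) (hxz : r x z) :
    ¬ ∃ m : α → α → α → β, IsQuasiMaltsev m ∧ IsTernaryPolymorphism r s m :=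
  fun ⟨_, hm, hp⟩ ↦ irrefl _ (hm.rel_diag_of_transitive_triangle hp hxy hyz hxz)

end QuasiMaltsev

/-- Theorem: for every `n ≥ 3`, the transitive tournament `T_n = (Fin n, <)` has no
quasi Maltsev polymorphism: there is no ternary operation `m` on `Fin n` satisfying
`m x x y = m y x x = m y y y` for all `x, y` and preserving the strict order
coordinatewise. -/
theorem transitive_tournament_no_quasiMaltsev (n : ℕ) (hn : 3 ≤ n) :
    ¬ ∃ m : Fin n → Fin n → Fin n → Fin n,
        (∀ x y, m x x y = m y x x ∧ m y x x = m y y y) ∧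
        (∀ a a' b b' c c' : Fin n,
          a < a' → b < b' → c < c' → m a b c < m a' b' c') := by
  have h01 := Fin.strictMono_castLE hn (show 0 < 1 by decide)
  have h12 := Fin.strictMono_castLE hn (show 1 < 2 by decide)
  exact transitive_tournament_no_quasiMaltsev_general h01 h12 (h01.trans h12)
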